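/- arXiv:2209.07580 — 5 statements merged into one kernel-verified Lean document; each statement's English description precedes it below -/
import Mathlib

section
/- Let Δ ≥ 1 and t ≥ 1 be integers, let B_1, …, B_Δ ≥ 1 be integers, and let p_1, …, p_Δ ∈ [0,1] satisfy ∑_{k=1}^Δ p_k ≤ 1. Let μ be any probability distribution on {0,1}^Δ whose coordinate means satisfy E_μ[U_k] ≤ p_k for every k ∈ {1,…,Δ}, and let U^{(1)}, …, U^{(t)} be i.i.d. with law μ. Let ν be the probability distribution on {0,1}^Δ that assigns probability p_k to the k-th standard basis vector e_k for each k and probability 1 − ∑_{k=1}^Δ p_k to the zero vector, and let V^{(1)}, …, V^{(t)} be i.i.d. with law ν. Then Pr[∃ k ∈ {1,…,Δ} : ∑_{s=1}^t U_k^{(s)} ≥ B_k] ≤ Pr[∃ k ∈ {1,…,Δ} : ∑_{s=1}^t V_k^{(s)} ≥ B_k]. -/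
open MeasureTheory Finset

/-- One-step comparison with fixed offsets `c`. -/
lemma wcc_one_step {Δ : ℕ} (B : Fin Δ → ℕ) (p : Fin Δ → ℝ)
    (μ ν : Measure (Fin Δ → Bool)) [IsProbabilityMeasure μ] [IsProbabilityMeasure ν]
    (hμmean : ∀ k : Fin Δ, (∫ x, (if x k then (1:ℝ) else 0) ∂μ) ≤ p k)
    (hνbasis : ∀ k : Fin Δ,
      ν {(fun j => decide (j = k) : Fin Δ → Bool)} = ENNReal.ofReal (p k))
    (c : Fin Δ → ℕ) :
    μ {x | ∃ k, B k ≤ c k + if x k then 1 else 0}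
      ≤ ν {x | ∃ k, B k ≤ c k + if x k then 1 else 0} := by
  classical
  by_cases h : ∃ k, B k ≤ c k
  · obtain ⟨k, hk⟩ := h
    have : {x : Fin Δ → Bool | ∃ k, B k ≤ c k + if x k then 1 else 0} = Set.univ := by
      ext x
      simp only [Set.mem_ofPred_eq, Set.mem_univ, iff_true]
      exact ⟨k, by omega⟩
    rw [this]; simp
  · push Not at h
    have hm : ∀ k, μ {x | x k = true} ≤ ENNReal.ofReal (p k) := by
      intro k
      have hms : MeasurableSet {x : Fin Δ → Bool | x k = true} := (Set.toFinite _).measurableSet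
      have h1 : (∫ x, (if x k then (1:ℝ) else 0) ∂μ) = μ.real {x | x k = true} := by
        rw [← integral_indicator_one hms]
        congr 1
        funext x
        simp [Set.indicator_apply]
      have h2 := hμmean k
      rw [h1] at h2
      rw [← ofReal_measureReal]
      exact ENNReal.ofReal_le_ofReal h2
    set S : Finset (Fin Δ) := Finset.univ.filter fun k => B k ≤ c k + 1 with hS
    calc μ {x | ∃ k, B k ≤ c k + if x k then 1 else 0}
        ≤ μ (⋃ k ∈ S, {x | x k = true}) := by
          apply measure_mono
          rintro x ⟨k, hk⟩
          have := h k
          by_cases hx : x k = true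
          · simp only [Set.mem_iUnion]
            refine ⟨k, ?_, hx⟩
            simpa [hS, hx] using hk
          · simp [hx] at hk; omega
      _ ≤ ∑ k ∈ S, μ {x | x k = true} := measure_biUnion_finset_le _ _
      _ ≤ ∑ k ∈ S, ν {(fun j => decide (j = k) : Fin Δ → Bool)} := by
          apply Finset.sum_le_sum
          intro k _
          rw [hνbasis]; exact hm k
      _ = ν (⋃ k ∈ S, {(fun j => decide (j = k) : Fin Δ → Bool)}) := by
          rw [measure_biUnion_finset]
          · intro i _ j _ hij
            simp only [Function.onFun, Set.disjoint_singleton]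
            intro he
            have := congrFun he i
            simp at this
            exact hij this
          · intro k _
            exact (Set.toFinite _).measurableSet
      _ ≤ _ := by
          apply measure_mono
          intro x hx
          simp only [Set.mem_iUnion] at hx
          obtain ⟨k, hk, rfl⟩ := hx
          refine ⟨k, ?_⟩
          simpa [hS] using hk

/-- Splitting off the first sample. -/
lemma wcc_split {Δ t : ℕ} (B c : Fin Δ → ℕ)
    (μ : Measure (Fin Δ → Bool)) [IsProbabilityMeasure μ] :
    (Measure.pi fun _ : Fin (t + 1) => μ)
        {ω | ∃ k, B k ≤ c k + ∑ s, if ω s k then 1 else 0}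
      = (μ.prod (Measure.pi fun _ : Fin t => μ))
        {q | ∃ k, B k ≤ c k + (if q.1 k then 1 else 0) + ∑ s, if q.2 s k then 1 else 0} := by
  have h := measurePreserving_piFinSuccAbove (fun _ : Fin (t + 1) => μ) 0
  rw [← h.measure_preimage (Set.toFinite _).measurableSet.nullMeasurableSet]
  congr 1
  ext ω
  change (∃ k, B k ≤ c k + ∑ s, if ω s k then 1 else 0) ↔
    ∃ k, B k ≤ c k + (if ω 0 k then 1 else 0) + ∑ s : Fin t, if ω (Fin.succAbove 0 s) k then 1 else 0
  simp only [Fin.sum_univ_succ, add_assoc, Fin.zero_succAbove]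
  exact Iff.rfl

/-- The comparison with arbitrary offsets, by induction on the number of samples. -/
lemma wcc_general {Δ : ℕ} (B : Fin Δ → ℕ) (p : Fin Δ → ℝ)
    (μ ν : Measure (Fin Δ → Bool)) [IsProbabilityMeasure μ] [IsProbabilityMeasure ν]
    (hμmean : ∀ k : Fin Δ, (∫ x, (if x k then (1:ℝ) else 0) ∂μ) ≤ p k)
    (hνbasis : ∀ k : Fin Δ,
      ν {(fun j => decide (j = k) : Fin Δ → Bool)} = ENNReal.ofReal (p k))
    (t : ℕ) : ∀ c : Fin Δ → ℕ,
    (Measure.pi fun _ : Fin t => μ) {ω | ∃ k, B k ≤ c k + ∑ s, if ω s k then 1 else 0}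
      ≤ (Measure.pi fun _ : Fin t => ν) {ω | ∃ k, B k ≤ c k + ∑ s, if ω s k then 1 else 0} := by
  induction t with
  | zero =>
    intro c
    rw [Measure.pi_of_empty, Measure.pi_of_empty]
  | succ t ih =>
    intro c
    rw [wcc_split, wcc_split]
    have hms : MeasurableSet {q : (Fin Δ → Bool) × (Fin t → Fin Δ → Bool) |
        ∃ k, B k ≤ c k + (if q.1 k then 1 else 0) + ∑ s, if q.2 s k then 1 else 0} :=
      (Set.toFinite _).measurableSet
    calc _ ≤ (μ.prod (Measure.pi fun _ : Fin t => ν)) {q |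
        ∃ k, B k ≤ c k + (if q.1 k then 1 else 0) + ∑ s, if q.2 s k then 1 else 0} := by
          rw [Measure.prod_apply hms, Measure.prod_apply hms]
          apply lintegral_mono
          intro x
          exact ih fun k => c k + if x k then 1 else 0
      _ ≤ _ := by
          rw [Measure.prod_apply_symm hms, Measure.prod_apply_symm hms]
          apply lintegral_mono
          intro ω
          have := wcc_one_step B p μ ν hμmean hνbasis
            (fun k => c k + ∑ s, if ω s k then 1 else 0)
          simp only [add_right_comm _ (∑ s, _)] at this
          exact this

/-- Worst-case correlation structure: among all probability distributions `μ` on `{0,1}^Δ`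
whose coordinate means are at most `p_k`, the probability that some coordinate of the
`t`-fold i.i.d. sum reaches its threshold `B_k` is maximized by the distribution `ν`
supported on the standard basis vectors (with mass `p_k` on `e_k`) and the zero vector
(with mass `1 − ∑_k p_k`). -/
theorem worst_case_correlation (Δ t : ℕ) (hΔ : 1 ≤ Δ) (ht : 1 ≤ t)
    (B : Fin Δ → ℕ) (hB : ∀ k, 1 ≤ B k)
    (p : Fin Δ → ℝ) (hp : ∀ k, p k ∈ Set.Icc (0:ℝ) 1) (hpsum : ∑ k, p k ≤ 1)
    (μ ν : Measure (Fin Δ → Bool))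
    [IsProbabilityMeasure μ] [IsProbabilityMeasure ν]
    (hμmean : ∀ k : Fin Δ, (∫ x, (if x k then (1:ℝ) else 0) ∂μ) ≤ p k)
    (hνbasis : ∀ k : Fin Δ,
      ν {(fun j => decide (j = k) : Fin Δ → Bool)} = ENNReal.ofReal (p k))
    (hνzero : ν {(fun _ => false : Fin Δ → Bool)} = ENNReal.ofReal (1 - ∑ k, p k)) :
    (Measure.pi fun _ : Fin t => μ)
        {ω : Fin t → (Fin Δ → Bool) | ∃ k : Fin Δ, B k ≤ ∑ s : Fin t, if ω s k then 1 else 0}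
      ≤ (Measure.pi fun _ : Fin t => ν)
        {ω : Fin t → (Fin Δ → Bool) | ∃ k : Fin Δ, B k ≤ ∑ s : Fin t, if ω s k then 1 else 0} := by
  simpa only [zero_add] using wcc_general B p μ ν hμmean hνbasis t (fun _ => 0)
end

section
/- For every fixed real α ∈ (0,1], the function η ↦ (1 − e^{−2αη} − 2α e^{−αη}) / (αη)² is increasing on the interval (0,1]. -/
open Real Set

lemma aux_key (a x : ℝ) (hx : 0 < x) (hxa : x ≤ a) (ha : a ≤ 1) :
    0 < x * (2 * exp (-x) ^ 2 + 2 * a * exp (-x)) - 2 * (1 - exp (-x) ^ 2 - 2 * a * exp (-x)) := by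
  have hU : exp x ≤ 1 + x + 3 / 4 * x ^ 2 := by
    have h := Real.exp_bound' hx.le (hxa.trans ha) (n := 2) (by norm_num)
    norm_num [Finset.sum_range_succ, Nat.factorial] at h
    linarith
  have hE := exp_pos x
  have hy := exp_pos (-x)
  have hEy : exp x * exp (-x) = 1 := by rw [← exp_add]; simp
  generalize exp x = E at *
  generalize exp (-x) = y at *
  have hx1 : x ≤ 1 := hxa.trans ha
  have h1 : E * (E - x ^ 2 - 2 * x) < x + 1 := by
    have h2 : E * (E - x ^ 2 - 2 * x) ≤ E * (1 - x - x ^ 2 / 4) :=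
      mul_le_mul_of_nonneg_left (by linarith) hE.le
    refine h2.trans_lt ?_
    rcases le_total 0 (1 - x - x ^ 2 / 4) with h | h
    · have h3 := mul_le_mul_of_nonneg_right hU h
      refine h3.trans_lt ?_
      have : 0 < x ^ 2 := by positivity
      have : 0 < x ^ 3 := by positivity
      have : 0 < x ^ 4 := by positivity
      nlinarith
    · have := mul_nonpos_of_nonneg_of_nonpos hE.le h
      linarith
  have h4 : 0 ≤ (a - x) * ((x + 2) * E) := mul_nonneg (by linarith) (by positivity)
  have h5 : 0 < (x + 1) + a * (x + 2) * E - E ^ 2 := by nlinarith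
  have h6 : 0 < 2 * y ^ 2 * ((x + 1) + a * (x + 2) * E - E ^ 2) := by positivity
  have h7 : x * (2 * y ^ 2 + 2 * a * y) - 2 * (1 - y ^ 2 - 2 * a * y)
      = 2 * y ^ 2 * ((x + 1) + a * (x + 2) * E - E ^ 2) := by
    linear_combination (-2 * a * (x + 2) * y + 2 * (E * y + 1)) * hEy
  rw [h7]; exact h6

/-- For every fixed `α ∈ (0,1]`, the function
`η ↦ (1 − e^{−2αη} − 2α e^{−αη}) / (αη)²` is increasing on `(0,1]`. -/
theorem increasing_on_Ioc (α : ℝ) (hα : α ∈ Set.Ioc (0:ℝ) 1) :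
    StrictMonoOn
      (fun η : ℝ => (1 - Real.exp (-2 * α * η) - 2 * α * Real.exp (-α * η)) / (α * η) ^ 2)
      (Set.Ioc (0:ℝ) 1) := by
  obtain ⟨h0, h1⟩ := hα
  have hd : ∀ η : ℝ, 0 < η → HasDerivAt
      (fun η : ℝ => (1 - Real.exp (-2 * α * η) - 2 * α * Real.exp (-α * η)) / (α * η) ^ 2)
      (((-(exp (-2 * α * η) * (-2 * α)) - 2 * α * (exp (-α * η) * (-α))) * (α * η) ^ 2
        - (1 - Real.exp (-2 * α * η) - 2 * α * Real.exp (-α * η)) * (2 * (α * η) * α))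
        / ((α * η) ^ 2) ^ 2) η := by
    intro η hη
    have e1 : HasDerivAt (fun η : ℝ => exp (-2 * α * η)) (exp (-2 * α * η) * (-2 * α)) η := by
      simpa using ((hasDerivAt_id η).const_mul (-2 * α)).exp
    have e2 : HasDerivAt (fun η : ℝ => exp (-α * η)) (exp (-α * η) * (-α)) η := by
      simpa using ((hasDerivAt_id η).const_mul (-α)).exp
    have e3 : HasDerivAt (fun η : ℝ => (α * η) ^ 2) (2 * (α * η) * α) η := by
      simpa using ((hasDerivAt_id η).const_mul α).fun_pow 2
    exact ((e1.const_sub 1).sub (e2.const_mul (2 * α))).div e3 (by positivity)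
  apply strictMonoOn_of_deriv_pos (convex_Ioc 0 1)
  · exact fun η hη => (hd η hη.1).continuousAt.continuousWithinAt
  · intro η hη
    rw [interior_Ioc] at hη
    obtain ⟨p, q⟩ := hη
    rw [(hd η p).deriv]
    have hx : 0 < α * η := by positivity
    have k := aux_key α (α * η) hx (by nlinarith) h1
    have s : exp (-2 * α * η) = exp (-(α * η)) ^ 2 := by
      rw [← exp_nat_mul]; congr 1; push_cast; ring
    have t : exp (-α * η) = exp (-(α * η)) := by congr 1; ring
    rw [s, t]
    refine div_pos ?_ (by positivity)
    have := mul_pos (mul_pos hx h0) k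
    linarith
end

section
/- Define g(x) := (1 − e^{−2x} − 2x e^{−x}) / x² for x > 0. Then there exists a unique η ∈ (0,∞) such that g′(η) = 0; the function g is strictly increasing on (0, η] and strictly decreasing on [η, ∞); moreover η ∈ (1.1, 1.2), and η is the unique maximizer of g on (0,∞). -/
open Real Set

/-- `g(x) = (1 − e^{−2x} − 2x e^{−x}) / x²`. -/
noncomputable def gVar (x : ℝ) : ℝ :=
  (1 - Real.exp (-2 * x) - 2 * x * Real.exp (-x)) / x ^ 2

/-- Numerator of the derivative of `gVar`, up to the factor `2 / x ^ 3`. -/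
noncomputable def gNum (x : ℝ) : ℝ :=
  (x + 1) * Real.exp (-x) ^ 2 + (x ^ 2 + x) * Real.exp (-x) - 1

lemma hasDerivAt_expneg (x : ℝ) : HasDerivAt (fun x : ℝ => Real.exp (-x)) (-Real.exp (-x)) x := by
  have h := (hasDerivAt_neg x).exp
  simpa using h

lemma gVar_eq (x : ℝ) : gVar x = (1 - Real.exp (-x) ^ 2 - 2 * x * Real.exp (-x)) / x ^ 2 := by
  unfold gVar
  rw [← Real.exp_nat_mul]
  norm_num

lemma gVar_hasDeriv (x : ℝ) (hx : 0 < x) : HasDerivAt gVar (2 * gNum x / x ^ 3) x := by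
  have he := hasDerivAt_expneg x
  have h1 := (((he.pow 2).const_sub 1).sub
    (((hasDerivAt_id x).const_mul 2).mul he)).div ((hasDerivAt_id x).pow 2)
    (by simpa using hx.ne')
  have h2 : gVar = fun x => (1 - Real.exp (-x) ^ 2 - 2 * x * Real.exp (-x)) / x ^ 2 :=
    funext gVar_eq
  rw [h2]
  refine (h1.congr_deriv ?_)
  have := hx.ne'
  simp [gNum]
  field_simp
  ring

lemma gNum_hasDeriv (x : ℝ) : HasDerivAt gNum
    (Real.exp (-x) * ((1 + x - x ^ 2) - (2 * x + 1) * Real.exp (-x))) x := by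
  have he := hasDerivAt_expneg x
  have h1 := ((((hasDerivAt_id x).add_const 1).mul (he.pow 2)).add
    ((((hasDerivAt_id x).pow 2).add (hasDerivAt_id x)).mul he)).sub_const 1
  refine (h1.congr_deriv ?_)
  simp
  ring

lemma gNum_eq (x : ℝ) : gNum x =
    Real.exp (-x) ^ 2 * ((x + 1) + (x ^ 2 + x) * Real.exp x - Real.exp x ^ 2) := by
  have h : Real.exp (-x) * Real.exp x = 1 := by rw [← Real.exp_add]; simp
  unfold gNum
  linear_combination (-(x ^ 2 + x) * Real.exp (-x) + Real.exp (-x) * Real.exp x + 1) * h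

lemma quad_pos {a b v P : ℝ} (ha : 0 ≤ a) (hb : 0 < b) (hv : 0 < v) (hvP : v ≤ P)
    (hP : 0 < b + a * P - P ^ 2) : 0 < b + a * v - v ^ 2 := by
  have hP0 : 0 < P := hv.trans_le hvP
  have h1 : P * (b + a * v - v ^ 2) =
    v * (b + a * P - P ^ 2) + (P - v) * (b + v * P) := by ring
  have h2 : 0 < P * (b + a * v - v ^ 2) := by
    rw [h1]
    have := mul_pos hv hP
    have := mul_nonneg (sub_nonneg.2 hvP) (by positivity : 0 ≤ b + v * P)
    linarith
  exact pos_of_mul_pos_right h2 hP0.le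

lemma exp_le_P {x : ℝ} (h0 : 0 ≤ x) (h1 : x ≤ 1) :
    Real.exp x ≤ 1 + x + x ^ 2 / 2 + x ^ 3 / 6 + 5 * x ^ 4 / 96 := by
  have h := Real.exp_bound' h0 h1 (n := 4) (by norm_num)
  simp [Finset.sum_range_succ, Nat.factorial] at h
  linarith

lemma gNum_pos_small {x : ℝ} (h0 : 0 < x) (h1 : x ≤ 1) : 0 < gNum x := by
  rw [gNum_eq]
  refine mul_pos (by positivity) (quad_pos (by positivity) (by positivity) (Real.exp_pos x)
    (exp_le_P h0.le h1) ?_)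
  have hx3 : 0 < x ^ 3 := by positivity
  have key : (x + 1) + (x ^ 2 + x) * (1 + x + x ^ 2 / 2 + x ^ 3 / 6 + 5 * x ^ 4 / 96)
      - (1 + x + x ^ 2 / 2 + x ^ 3 / 6 + 5 * x ^ 4 / 96) ^ 2
      = x ^ 3 * (1 / 6 - x / 48 - 5 * x ^ 2 / 96 - x ^ 3 / 36 - 5 * x ^ 4 / 288 - 25 * x ^ 5 / 9216) := by
    ring
  rw [key]
  refine mul_pos hx3 ?_
  have e2 : x ^ 2 ≤ 1 := pow_le_one₀ h0.le h1
  have e3 : x ^ 3 ≤ 1 := pow_le_one₀ h0.le h1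
  have e4 : x ^ 4 ≤ 1 := pow_le_one₀ h0.le h1
  have e5 : x ^ 5 ≤ 1 := pow_le_one₀ h0.le h1
  linarith

lemma gNum_pos_11 : 0 < gNum 1.1 := by
  rw [gNum_eq]
  refine mul_pos (by positivity) (quad_pos (P := 3.005) (by norm_num) (by norm_num)
    (Real.exp_pos _) ?_ (by norm_num))
  have h1 := exp_le_P (x := 0.1) (by norm_num) (by norm_num)
  have h2 := Real.exp_one_lt_d9
  have h3 : Real.exp 1.1 = Real.exp 1 * Real.exp 0.1 := by
    rw [← Real.exp_add]; norm_num
  rw [h3]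
  calc Real.exp 1 * Real.exp 0.1 ≤ 2.7182818286 * _ :=
        mul_le_mul h2.le h1 (Real.exp_pos _).le (by norm_num)
    _ ≤ 3.005 := by norm_num

lemma gNum_neg_12 : gNum 1.2 < 0 := by
  have h2 := Real.exp_one_gt_d9
  have h1 := Real.quadratic_le_exp_of_nonneg (x := 0.2) (by norm_num)
  have h3 : Real.exp 1.2 = Real.exp 1 * Real.exp 0.2 := by
    rw [← Real.exp_add]; norm_num
  have h4 : (3.31 : ℝ) ≤ Real.exp 1.2 := by
    rw [h3]
    calc (3.31 : ℝ) ≤ 2.7182818283 * (1 + 0.2 + 0.2 ^ 2 / 2) := by norm_num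
      _ ≤ _ := mul_le_mul h2.le h1 (by norm_num) (Real.exp_pos _).le
  rw [gNum_eq]
  refine mul_neg_of_pos_of_neg (by positivity) ?_
  nlinarith

lemma gNum_anti : StrictAntiOn gNum (Set.Ici 1) := by
  refine strictAntiOn_of_deriv_neg (convex_Ici 1)
    (fun x _ => (gNum_hasDeriv x).continuousAt.continuousWithinAt) ?_
  intro x hx
  rw [interior_Ici] at hx
  have hx1 : (1 : ℝ) < x := hx
  rw [(gNum_hasDeriv x).deriv]
  refine mul_neg_of_pos_of_neg (Real.exp_pos _) ?_
  have hu := Real.exp_pos (-x)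
  have h : Real.exp (-x) * Real.exp x = 1 := by rw [← Real.exp_add]; simp
  have hψ : (1 + x - x ^ 2) * Real.exp x - (2 * x + 1) < 0 := by
    have hd : ∀ y : ℝ, HasDerivAt (fun y : ℝ => (1 + y - y ^ 2) * Real.exp y - (2 * y + 1))
        ((2 + y) * (1 - y) * Real.exp y - 2) y := by
      intro y
      have h1 := (((((hasDerivAt_id y).const_add 1).sub ((hasDerivAt_id y).pow 2)).mul
        (Real.hasDerivAt_exp y)).sub (((hasDerivAt_id y).const_mul 2).add_const 1))
      refine (h1.congr_deriv ?_)
      simp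
      ring
    have ha : StrictAntiOn (fun y : ℝ => (1 + y - y ^ 2) * Real.exp y - (2 * y + 1))
        (Set.Ici 1) := by
      refine strictAntiOn_of_deriv_neg (convex_Ici 1)
        (fun y _ => (hd y).continuousAt.continuousWithinAt) ?_
      intro y hy
      rw [interior_Ici] at hy
      have hy1 : (1 : ℝ) < y := hy
      rw [(hd y).deriv]
      have : (2 + y) * (1 - y) * Real.exp y < 0 :=
        mul_neg_of_neg_of_pos (mul_neg_of_pos_of_neg (by linarith) (by linarith)) (Real.exp_pos _)
      linarith
    have h5 := ha (Set.mem_Ici.2 le_rfl) (Set.mem_Ici.2 hx1.le) hx1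
    have h6 := Real.exp_one_lt_d9
    norm_num at h5
    linarith
  have h7 : (1 + x - x ^ 2) - (2 * x + 1) * Real.exp (-x)
      = Real.exp (-x) * ((1 + x - x ^ 2) * Real.exp x - (2 * x + 1)) := by
    linear_combination (-(1 + x - x ^ 2)) * h
  rw [h7]
  exact mul_neg_of_pos_of_neg hu hψ

theorem gVar_unique_maximizer :
    ∃ η : ℝ, 0 < η ∧ deriv gVar η = 0 ∧
      (∀ x : ℝ, 0 < x → deriv gVar x = 0 → x = η) ∧
      StrictMonoOn gVar (Set.Ioc 0 η) ∧
      StrictAntiOn gVar (Set.Ici η) ∧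
      η ∈ Set.Ioo (1.1 : ℝ) 1.2 ∧
      (∀ x : ℝ, 0 < x → x ≠ η → gVar x < gVar η) := by
  have hc : ContinuousOn gNum (Set.Icc 1.1 1.2) :=
    fun x _ => (gNum_hasDeriv x).continuousAt.continuousWithinAt
  obtain ⟨η, ⟨hη1, hη2⟩, hη⟩ := intermediate_value_Ioo' (by norm_num : (1.1 : ℝ) ≤ 1.2) hc
    ⟨gNum_neg_12, gNum_pos_11⟩
  have h1 : (1 : ℝ) < η := lt_trans (by norm_num) hη1
  have h0 : 0 < η := by linarith
  have hpos : ∀ x, 0 < x → x < η → 0 < gNum x := by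
    intro x hx hxη
    rcases le_total x 1 with h | h
    · exact gNum_pos_small hx h
    · have := gNum_anti (Set.mem_Ici.2 h) (Set.mem_Ici.2 h1.le) hxη
      linarith
  have hneg : ∀ x, η < x → gNum x < 0 := by
    intro x hxη
    have := gNum_anti (Set.mem_Ici.2 h1.le) (Set.mem_Ici.2 (h1.trans hxη).le) hxη
    linarith
  have hmono : StrictMonoOn gVar (Set.Ioc 0 η) := by
    refine strictMonoOn_of_deriv_pos (convex_Ioc 0 η)
      (fun x hx => (gVar_hasDeriv x hx.1).continuousAt.continuousWithinAt) ?_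
    intro x hx
    rw [interior_Ioc] at hx
    rw [(gVar_hasDeriv x hx.1).deriv]
    have := hpos x hx.1 hx.2
    have := hx.1
    positivity
  have hanti : StrictAntiOn gVar (Set.Ici η) := by
    refine strictAntiOn_of_deriv_neg (convex_Ici η)
      (fun x hx => (gVar_hasDeriv x (h0.trans_le hx)).continuousAt.continuousWithinAt) ?_
    intro x hx
    rw [interior_Ici] at hx
    have hx' : η < x := hx
    have hx0 : 0 < x := h0.trans hx'
    rw [(gVar_hasDeriv x hx0).deriv]
    have := hneg x hx'
    exact div_neg_of_neg_of_pos (by linarith) (by positivity)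
  refine ⟨η, h0, ?_, ?_, hmono, hanti, ⟨hη1, hη2⟩, ?_⟩
  · rw [(gVar_hasDeriv η h0).deriv, hη]; simp
  · intro x hx hd
    rw [(gVar_hasDeriv x hx).deriv, div_eq_zero_iff] at hd
    have hz : gNum x = 0 := by
      rcases hd with h | h
      · linarith
      · exact absurd h (by positivity)
    rcases lt_trichotomy x η with h | h | h
    · have := hpos x hx h; linarith
    · exact h
    · have := hneg x h; linarith
  · intro x hx hne
    rcases lt_or_gt_of_ne hne with h | h
    · exact hmono ⟨hx, h.le⟩ ⟨h0, le_rfl⟩ h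
    · exact hanti (Set.mem_Ici.2 le_rfl) (Set.mem_Ici.2 h.le) h
end

section
/- Let Φ denote the cumulative distribution function of the standard normal distribution. For every real c > 0 and every integer Δ ≥ 2 such that c·√(ln Δ) ≥ 1, one has Φ(c √(ln Δ))^Δ ≤ exp( − Δ^{1 − c²/2} / (2 √(2π) · c · √(ln Δ)) ). In particular, for every fixed c with 0 < c < √2, Φ(c √(ln Δ))^Δ → 0 as Δ → ∞. -/
open Real MeasureTheory Filter

/-- The cumulative distribution function of the standard normal distribution. -/
noncomputable def stdNormalCDF (x : ℝ) : ℝ :=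
  ∫ t in Set.Iic x, Real.exp (-t ^ 2 / 2) / Real.sqrt (2 * Real.pi)

lemma tail_lower (x : ℝ) (hx : 1 ≤ x) (hint : Integrable (fun t : ℝ => Real.exp (-t ^ 2 / 2))) :
    Real.exp (-x ^ 2 / 2) / (2 * x) ≤ ∫ t in Set.Ioi x, Real.exp (-t ^ 2 / 2) := by
  have hd : ∀ t ∈ Set.Ici x, HasDerivAt (fun t : ℝ => -(Real.exp (-t ^ 2 / 2) * (t / (t ^ 2 + 1))))
      (Real.exp (-t ^ 2 / 2) * (1 - 2 / (t ^ 2 + 1) ^ 2)) t := by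
    intro t _
    have hne : t ^ 2 + 1 ≠ 0 := by positivity
    have h1 : HasDerivAt (fun t : ℝ => -t ^ 2 / 2) (-t) t := by
      have := ((hasDerivAt_pow 2 t).neg).div_const 2
      refine HasDerivAt.congr_deriv this ?_
      push_cast
      ring
    have h2 : HasDerivAt (fun t : ℝ => t / (t ^ 2 + 1))
        ((1 * (t ^ 2 + 1) - t * (2 * t)) / (t ^ 2 + 1) ^ 2) t := by
      have h3 : HasDerivAt (fun t : ℝ => t ^ 2 + 1) (2 * t) t := by
        simpa using (hasDerivAt_pow 2 t).add_const 1
      exact (hasDerivAt_id t).div h3 hne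
    refine HasDerivAt.congr_deriv (h1.exp.mul h2).neg ?_
    field_simp
    ring
  have hpos : ∀ t ∈ Set.Ioi x, 0 ≤ Real.exp (-t ^ 2 / 2) * (1 - 2 / (t ^ 2 + 1) ^ 2) := by
    intro t ht
    have ht1 : 1 ≤ t := hx.trans (le_of_lt ht)
    apply mul_nonneg (Real.exp_pos _).le
    rw [sub_nonneg, div_le_one (by positivity)]
    nlinarith [sq_nonneg t]
  have hlim : Tendsto (fun t : ℝ => -(Real.exp (-t ^ 2 / 2) * (t / (t ^ 2 + 1)))) atTop (nhds 0) := by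
    have h0 : Tendsto (fun t : ℝ => -t⁻¹) atTop (nhds 0) := by
      simpa using (tendsto_inv_atTop_zero (𝕜 := ℝ)).neg
    refine tendsto_of_tendsto_of_tendsto_of_le_of_le' h0 tendsto_const_nhds ?_ ?_
    · filter_upwards [eventually_gt_atTop 0] with t ht
      apply neg_le_neg
      have h1 : Real.exp (-t ^ 2 / 2) ≤ 1 := Real.exp_le_one_iff.2 (by nlinarith)
      have h2 : t / (t ^ 2 + 1) ≤ t⁻¹ := by
        rw [inv_eq_one_div, div_le_div_iff₀ (by positivity) ht]; nlinarith
      calc _ ≤ 1 * t⁻¹ := by gcongr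
        _ = _ := one_mul _
    · filter_upwards [eventually_gt_atTop 0] with t ht
      have : 0 ≤ Real.exp (-t ^ 2 / 2) * (t / (t ^ 2 + 1)) := by positivity
      linarith
  have hI := integral_Ioi_of_hasDerivAt_of_nonneg' hd hpos hlim
  have hi := integrableOn_Ioi_deriv_of_nonneg' hd hpos hlim
  calc Real.exp (-x ^ 2 / 2) / (2 * x) ≤ Real.exp (-x ^ 2 / 2) * (x / (x ^ 2 + 1)) := by
        rw [div_eq_mul_one_div]
        refine mul_le_mul_of_nonneg_left ?_ (Real.exp_pos _).le
        rw [div_le_div_iff₀ (by positivity) (by positivity)]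
        nlinarith
    _ = ∫ t in Set.Ioi x, Real.exp (-t ^ 2 / 2) * (1 - 2 / (t ^ 2 + 1) ^ 2) := by
        rw [hI]; ring
    _ ≤ _ := by
        apply integral_mono hi hint.integrableOn
        intro t
        have : 0 ≤ 2 / (t ^ 2 + 1) ^ 2 := by positivity
        have h := Real.exp_pos (-t ^ 2 / 2)
        simp only
        nlinarith

lemma cdf_upper (x : ℝ) (hx : 1 ≤ x) :
    stdNormalCDF x ≤ 1 - Real.exp (-x ^ 2 / 2) / (2 * x) / Real.sqrt (2 * Real.pi) := by
  have hint : Integrable (fun t : ℝ => Real.exp (-t ^ 2 / 2)) := by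
    have := integrable_exp_neg_mul_sq (b := 1 / 2) (by norm_num)
    convert this using 3
    ring
  have htot : ∫ t : ℝ, Real.exp (-t ^ 2 / 2) = Real.sqrt (2 * Real.pi) := by
    have := integral_gaussian (1 / 2)
    convert this using 2
    · ext t; congr 1; ring
    · ring
  have hsum := intervalIntegral.integral_Iic_add_Ioi (b := x) hint.integrableOn hint.integrableOn
  have ht := tail_lower x hx hint
  have hs : 0 < Real.sqrt (2 * Real.pi) := by positivity
  unfold stdNormalCDF
  rw [integral_div, le_sub_iff_add_le, ← add_div, div_le_one hs]
  linarith

lemma cdf_nn (x : ℝ) : 0 ≤ stdNormalCDF x :=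
  integral_nonneg fun t => by positivity

lemma part1 (c : ℝ) (hc : 0 < c) (Δ : ℕ) (hΔ : 2 ≤ Δ) (h : 1 ≤ c * Real.sqrt (Real.log Δ)) :
      stdNormalCDF (c * Real.sqrt (Real.log Δ)) ^ Δ ≤
        Real.exp (-((Δ:ℝ) ^ (1 - c ^ 2 / 2) /
          (2 * Real.sqrt (2 * Real.pi) * c * Real.sqrt (Real.log Δ)))) := by
  have hD : (0:ℝ) < Δ := by positivity
  have hlog : 0 ≤ Real.log Δ := Real.log_natCast_nonneg _
  have h1 := cdf_upper _ h
  have h2 := h1.trans (Real.one_sub_le_exp_neg _)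
  refine (pow_le_pow_left₀ (cdf_nn _) h2 Δ).trans (le_of_eq ?_)
  rw [← Real.exp_nat_mul]
  congr 1
  have h3 : Real.exp (-(c * Real.sqrt (Real.log Δ)) ^ 2 / 2) * Δ = (Δ:ℝ) ^ (1 - c ^ 2 / 2) := by
    rw [mul_pow, Real.sq_sqrt hlog, Real.rpow_def_of_pos hD]
    nth_rw 2 [← Real.exp_log hD]
    rw [← Real.exp_add]
    congr 1
    ring
  rw [← h3, div_div]
  ring

/-- For every `c > 0` and integer `Δ ≥ 2` with `c√(ln Δ) ≥ 1`:
`Φ(c√(ln Δ))^Δ ≤ exp(−Δ^{1−c²/2}/(2√(2π) c √(ln Δ)))`; in particular, for fixed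
`0 < c < √2`, `Φ(c√(ln Δ))^Δ → 0` as `Δ → ∞`. -/
theorem phi_pow_tail_bound :
    (∀ c : ℝ, 0 < c → ∀ Δ : ℕ, 2 ≤ Δ → 1 ≤ c * Real.sqrt (Real.log Δ) →
      stdNormalCDF (c * Real.sqrt (Real.log Δ)) ^ Δ ≤
        Real.exp (-((Δ:ℝ) ^ (1 - c ^ 2 / 2) /
          (2 * Real.sqrt (2 * Real.pi) * c * Real.sqrt (Real.log Δ))))) ∧
    (∀ c : ℝ, 0 < c → c < Real.sqrt 2 →
      Filter.Tendsto (fun Δ : ℕ => stdNormalCDF (c * Real.sqrt (Real.log Δ)) ^ Δ)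
        Filter.atTop (nhds 0)) := by
  refine ⟨part1, fun c hc hc2 => ?_⟩
  have ha : 0 < 1 - c ^ 2 / 2 := by
    have := (Real.lt_sqrt hc.le).1 hc2
    linarith
  have hL : Tendsto (fun n : ℕ => Real.log n) atTop atTop :=
    Real.tendsto_log_atTop.comp tendsto_natCast_atTop_atTop
  have hS : Tendsto (fun n : ℕ => c * Real.sqrt (Real.log n)) atTop atTop :=
    (Real.tendsto_sqrt_atTop.comp hL).const_mul_atTop hc
  have hE := (tendsto_exp_mul_div_rpow_atTop (1 / 2) _ ha).comp hL
  have hK : 0 < (2 * Real.sqrt (2 * Real.pi) * c)⁻¹ := by positivity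
  have hF := Real.tendsto_exp_neg_atTop_nhds_zero.comp (hE.const_mul_atTop hK)
  refine tendsto_of_tendsto_of_tendsto_of_le_of_le' tendsto_const_nhds hF ?_ ?_
  · exact Eventually.of_forall fun n => pow_nonneg (cdf_nn _) _
  · filter_upwards [hS.eventually_ge_atTop 1, eventually_ge_atTop 2] with n h1 h2
    refine (part1 c hc n h2 h1).trans (le_of_eq ?_)
    have hD : (0:ℝ) < n := by positivity
    simp only [Function.comp]
    rw [Real.rpow_def_of_pos hD, Real.sqrt_eq_rpow (Real.log n)]
    congr 2
    rw [mul_comm (Real.log n)]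
    field_simp
end

section
/- For every integer Δ ≥ 2 and every real B > 0: ∫_0^1 [1 − (1 − e^{−B x²/2})^Δ] dx ≤ √(2/B) · (√(ln Δ) + 1/(2 √(ln Δ))). Consequently ∫_0^1 [1 − (1 − e^{−B x²/2})^Δ] dx ≤ √2 · √(ln Δ / B) · (1 + o(1)), where o(1) vanishes as Δ → ∞. -/
open Real MeasureTheory Filter

lemma aux_bound (Δ : ℕ) (hΔ : 2 ≤ Δ) (B : ℝ) (hB : 0 < B) :
    (∫ x in (0:ℝ)..1, (1 - (1 - Real.exp (-B * x ^ 2 / 2)) ^ Δ))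
        ≤ Real.sqrt (2 / B) *
          (Real.sqrt (Real.log Δ) + 1 / (2 * Real.sqrt (Real.log Δ))) := by
  have hΔ1 : (1:ℝ) < Δ := by exact_mod_cast (by omega : 1 < Δ)
  have hlog : 0 < Real.log Δ := Real.log_pos hΔ1
  have hL : 0 < Real.sqrt (Real.log Δ) := Real.sqrt_pos.2 hlog
  have hc : 0 < Real.sqrt (2 / B) := Real.sqrt_pos.2 (by positivity)
  have hL2 : Real.sqrt (Real.log Δ) ^ 2 = Real.log Δ := Real.sq_sqrt hlog.le
  have hc2 : Real.sqrt (2 / B) ^ 2 = 2 / B := Real.sq_sqrt (by positivity)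
  set L := Real.sqrt (Real.log Δ) with hLdef
  set c := Real.sqrt (2 / B) with hcdef
  set f : ℝ → ℝ := fun x => 1 - (1 - Real.exp (-B * x ^ 2 / 2)) ^ Δ with hf
  have hfc : Continuous f := by fun_prop
  have he1 : ∀ x : ℝ, Real.exp (-B * x ^ 2 / 2) ≤ 1 := by
    intro x
    rw [Real.exp_le_one_iff]
    have : 0 ≤ B * x ^ 2 := by positivity
    linarith
  have hf1 : ∀ x, f x ≤ 1 := by
    intro x
    have : 0 ≤ (1 - Real.exp (-B * x ^ 2 / 2)) ^ Δ := pow_nonneg (by linarith [he1 x]) _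
    simp only [hf]; linarith
  have hf2 : ∀ x, f x ≤ Δ * Real.exp (-B * x ^ 2 / 2) := by
    intro x
    have := one_add_mul_le_pow (a := -Real.exp (-B * x ^ 2 / 2)) (by linarith [he1 x]) Δ
    simp only [hf]
    rw [← sub_eq_add_neg] at this
    linarith
  have hI : ∀ b : ℝ, 0 ≤ b → ∫ x in (0:ℝ)..b, f x ≤ b := by
    intro b hb
    have := intervalIntegral.integral_mono_on hb (hfc.intervalIntegrable (μ := volume) 0 b)
      (continuous_const.intervalIntegrable (μ := volume) (u := fun _ => (1:ℝ)) 0 b) (fun x _ => hf1 x)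
    simpa using this
  have ha : 0 < c * L := by positivity
  have hsplit : c * (L + 1 / (2 * L)) = c * L + c / (2 * L) := by ring
  rw [hsplit]
  have hpos : 0 < c / (2 * L) := by positivity
  rcases le_total 1 (c * L) with h1 | h1
  · have := hI 1 zero_le_one
    linarith
  · rw [← intervalIntegral.integral_add_adjacent_intervals
      (hfc.intervalIntegrable (μ := volume) 0 (c * L)) (hfc.intervalIntegrable (c * L) 1)]
    refine add_le_add (hI _ ha.le) ?_
    set g : ℝ → ℝ := fun x => Δ / (c * L) * (x * Real.exp (-B * x ^ 2 / 2)) with hg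
    have hgc : Continuous g := by fun_prop
    have hle : ∫ x in (c * L)..1, f x ≤ ∫ x in (c * L)..1, g x := by
      refine intervalIntegral.integral_mono_on h1 (hfc.intervalIntegrable _ _)
        (hgc.intervalIntegrable _ _) ?_
      intro x hx
      refine (hf2 x).trans ?_
      have h2 : 1 ≤ x / (c * L) := (one_le_div ha).2 hx.1
      have h3 : 0 ≤ Δ * Real.exp (-B * x ^ 2 / 2) := by positivity
      calc Δ * Real.exp (-B * x ^ 2 / 2) ≤ Δ * Real.exp (-B * x ^ 2 / 2) * (x / (c * L)) :=
            le_mul_of_one_le_right h3 h2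
        _ = g x := by simp only [hg]; ring
    refine hle.trans ?_
    have hder : ∀ x ∈ Set.uIcc (c * L) 1,
        HasDerivAt (fun x : ℝ => -(Δ / (c * L) / B) * Real.exp (-B * x ^ 2 / 2)) (g x) x := by
      intro x _
      have h := ((((hasDerivAt_pow 2 x).const_mul (-B)).div_const 2).exp).const_mul
        (-(Δ / (c * L) / B))
      refine h.congr_deriv ?_
      simp only [hg]
      field_simp
      norm_num
      ring
    rw [intervalIntegral.integral_eq_sub_of_hasDerivAt hder (hgc.intervalIntegrable _ _)]
    have hexp : Real.exp (-B * (c * L) ^ 2 / 2) = 1 / Δ := by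
      have : -B * (c * L) ^ 2 / 2 = -Real.log Δ := by
        rw [mul_pow, hc2, hL2]; field_simp
      rw [this, Real.exp_neg, Real.exp_log (by linarith)]; simp
    simp only [hexp]
    have h4 : 0 ≤ Δ / (c * L) / B * Real.exp (-B * 1 ^ 2 / 2) := by positivity
    have h5 : Δ / (c * L) / B * (1 / Δ) = c / (2 * L) := by
      have hBc : B * c ^ 2 = 2 := by rw [hc2]; field_simp
      have : (Δ:ℝ) ≠ 0 := by linarith
      field_simp
      linarith
    linarith

/-- For every integer `Δ ≥ 2` and real `B > 0`:
`∫_0^1 [1 − (1 − e^{−Bx²/2})^Δ] dx ≤ √(2/B)(√(ln Δ) + 1/(2√(ln Δ)))`; consequently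
the integral is at most `√2 √(ln Δ/B) (1 + o(1))` where `o(1)` vanishes as `Δ → ∞`. -/
theorem integral_tail_estimate :
    (∀ Δ : ℕ, 2 ≤ Δ → ∀ B : ℝ, 0 < B →
      (∫ x in (0:ℝ)..1, (1 - (1 - Real.exp (-B * x ^ 2 / 2)) ^ Δ))
        ≤ Real.sqrt (2 / B) *
          (Real.sqrt (Real.log Δ) + 1 / (2 * Real.sqrt (Real.log Δ)))) ∧
    (∃ e : ℕ → ℝ, Filter.Tendsto e Filter.atTop (nhds 0) ∧
      ∀ Δ : ℕ, 2 ≤ Δ → ∀ B : ℝ, 0 < B →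
        (∫ x in (0:ℝ)..1, (1 - (1 - Real.exp (-B * x ^ 2 / 2)) ^ Δ))
          ≤ Real.sqrt 2 * Real.sqrt (Real.log Δ / B) * (1 + e Δ)) := by
  refine ⟨aux_bound, fun Δ => 1 / (2 * Real.log Δ), ?_, ?_⟩
  · have h : Tendsto (fun Δ : ℕ => 2 * Real.log (Δ:ℝ)) atTop atTop :=
      (Real.tendsto_log_atTop.comp tendsto_natCast_atTop_atTop).const_mul_atTop two_pos
    simp only [one_div]
    exact h.inv_tendsto_atTop
  · intro Δ hΔ B hB
    refine (aux_bound Δ hΔ B hB).trans (le_of_eq ?_)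
    have hΔ1 : (1:ℝ) < Δ := by exact_mod_cast (by omega : 1 < Δ)
    have hlog : 0 < Real.log Δ := Real.log_pos hΔ1
    have hL : 0 < Real.sqrt (Real.log Δ) := Real.sqrt_pos.2 hlog
    have hL2 : Real.sqrt (Real.log Δ) ^ 2 = Real.log Δ := Real.sq_sqrt hlog.le
    rw [Real.sqrt_div (by norm_num), Real.sqrt_div hlog.le]
    simp only []
    have h6 : 1 / (2 * Real.log Δ) = 1 / (2 * Real.sqrt (Real.log Δ) ^ 2) := by rw [hL2]
    rw [h6]
    field_simp
end
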